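/- For every fixed natural number n, the function θ ↦ ∫_{−1}^{1} P_n(x) e^{−iθx} dx − (2 (−i)^n / θ) sin(θ − nπ/2) is O(θ^{−2}) as θ → ∞, where P_n is the Legendre polynomial. -/

import Mathlib

open MeasureTheory Asymptotics Filter

/-- The Legendre polynomial `P n`, defined by Rodrigues' formula
`P_n(x) = (1/(2^n n!)) (d/dx)^n ((x² − 1)^n)`. -/
noncomputable def legendre (n : ℕ) (x : ℝ) : ℝ :=
  (1 / ((2 : ℝ) ^ n * n.factorial)) * iteratedDeriv n (fun y : ℝ => (y ^ 2 - 1) ^ n) x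

open Polynomial in
/-- The Legendre polynomial as an element of `ℝ[X]`. -/
noncomputable def legendrePolynomial (n : ℕ) : ℝ[X] :=
  C (1 / ((2 : ℝ) ^ n * n.factorial)) * derivative^[n] ((X ^ 2 - 1) ^ n)

open Polynomial in
theorem Polynomial.iteratedDeriv_eval (p : ℝ[X]) (n : ℕ) :
    iteratedDeriv n (fun x => p.eval x) = fun x => (derivative^[n] p).eval x := by
  induction n generalizing p with
  | zero => simp
  | succ n ih =>
    have h : _root_.deriv (fun x => p.eval x) = fun x => (derivative p).eval x := by
      ext x
      exact p.deriv
    rw [iteratedDeriv_succ', h, ih, Function.iterate_succ_apply]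

theorem legendre_eq_eval (n : ℕ) (x : ℝ) : legendre n x = (legendrePolynomial n).eval x := by
  have h := congrFun
    (Polynomial.iteratedDeriv_eval ((Polynomial.X ^ 2 - 1) ^ n : Polynomial ℝ) n) x
  simp only [Polynomial.eval_pow, Polynomial.eval_sub, Polynomial.eval_X,
    Polynomial.eval_one] at h
  rw [legendre, legendrePolynomial, h, Polynomial.eval_mul, Polynomial.eval_C]

open Polynomial in
/-- The endpoint values `P n 1 = 1` and `P n (-1) = (-1) ^ n`. -/
theorem legendrePolynomial_eval_of_sq_eq_one (n : ℕ) {a : ℝ} (ha : a ^ 2 = 1) :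
    (legendrePolynomial n).eval a = a ^ n := by
  have hC : (C a : ℝ[X]) ^ 2 = 1 := by rw [← C_pow, ha, C_1]
  have htaylor : taylor a ((X ^ 2 - 1) ^ n) = (X + C (2 * a)) ^ n * X ^ n := by
    rw [taylor_apply, pow_comp, sub_comp, pow_comp, X_comp, one_comp, ← mul_pow, C_mul, C_ofNat]
    congr 1
    linear_combination hC
  have hcoeff : (hasseDeriv n ((X ^ 2 - 1) ^ n : ℝ[X])).eval a = (2 * a) ^ n := by
    rw [← taylor_coeff, htaylor, coeff_mul_X_pow', if_pos le_rfl, Nat.sub_self,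
      coeff_zero_eq_eval_zero]
    simp
  have hfac : (n.factorial : ℝ) ≠ 0 := by exact_mod_cast n.factorial_ne_zero
  rw [legendrePolynomial, ← factorial_smul_hasseDeriv, eval_mul, eval_C, LinearMap.smul_apply,
    eval_smul, hcoeff, nsmul_eq_mul, mul_pow]
  field_simp

/-- The Fourier integral of a real polynomial over `[-1, 1]`. -/
noncomputable def polynomialFourier (p : Polynomial ℝ) (θ : ℝ) : ℂ :=
  ∫ x in (-1 : ℝ)..1, ((p.eval x : ℝ) : ℂ) * Complex.exp (-Complex.I * θ * x)

/-- The boundary term produced by integrating `polynomialFourier p θ` by parts. -/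
noncomputable def fourierBoundary (p : Polynomial ℝ) (θ : ℝ) : ℂ :=
  ((p.eval 1 : ℝ) : ℂ) * Complex.exp (-Complex.I * θ)
    - ((p.eval (-1) : ℝ) : ℂ) * Complex.exp (Complex.I * θ)

theorem norm_exp_neg_I_mul_mul (θ x : ℝ) : ‖Complex.exp (-Complex.I * θ * x)‖ = 1 := by
  rw [Complex.norm_exp]
  simp

theorem polynomialFourier_eq (p : Polynomial ℝ) {θ : ℝ} (hθ : θ ≠ 0) :
    polynomialFourier p θ =
      (fourierBoundary p θ - polynomialFourier p.derivative θ) / (-Complex.I * θ) := by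
  set c : ℂ := -Complex.I * θ with hc
  have hc0 : c ≠ 0 := by simp [hc, hθ]
  have hu (x : ℝ) : HasDerivAt (fun x : ℝ => ((p.eval x : ℝ) : ℂ))
      ((p.derivative.eval x : ℝ) : ℂ) x := (p.hasDerivAt x).ofReal_comp
  have hv (x : ℝ) : HasDerivAt (fun x : ℝ => Complex.exp (c * x)) (c * Complex.exp (c * x)) x := by
    have h := ((hasDerivAt_id (x : ℂ)).const_mul c).cexp.comp_ofReal
    simpa [mul_comm] using h
  have hparts := intervalIntegral.integral_mul_deriv_eq_deriv_mul (a := -1) (b := 1)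
    (fun x _ => hu x) (fun x _ => hv x)
    (by apply Continuous.intervalIntegrable; fun_prop)
    (by apply Continuous.intervalIntegrable; fun_prop)
  have hleft : ∫ x in (-1 : ℝ)..1, ((p.eval x : ℝ) : ℂ) * (c * Complex.exp (c * x)) =
      c * polynomialFourier p θ := by
    rw [polynomialFourier, ← intervalIntegral.integral_const_mul]
    congr 1
    ext x
    ring
  rw [hleft] at hparts
  rw [eq_div_iff hc0, mul_comm, hparts, fourierBoundary, polynomialFourier]
  simp [hc]

theorem exists_norm_polynomialFourier_le (p : Polynomial ℝ) :
    ∃ K : ℝ, ∀ θ : ℝ, ‖polynomialFourier p θ‖ ≤ K := by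
  obtain ⟨K, hK⟩ := (isCompact_Icc (a := (-1 : ℝ)) (b := 1)).exists_bound_of_continuousOn
    p.continuous.continuousOn
  refine ⟨K * |1 - (-1)|, fun θ => intervalIntegral.norm_integral_le_of_norm_le_const ?_⟩
  intro x hx
  rw [norm_mul, norm_exp_neg_I_mul_mul, mul_one, Complex.norm_real]
  rw [Set.uIoc_of_le (by norm_num)] at hx
  exact hK x ⟨hx.1.le, hx.2⟩

theorem norm_fourierBoundary_le (p : Polynomial ℝ) (θ : ℝ) :
    ‖fourierBoundary p θ‖ ≤ |p.eval 1| + |p.eval (-1)| := by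
  have h₁ := norm_exp_neg_I_mul_mul θ 1
  have h₂ := norm_exp_neg_I_mul_mul θ (-1)
  simp only [Complex.ofReal_one, Complex.ofReal_neg, mul_neg, mul_one, neg_mul, neg_neg] at h₁ h₂
  refine (norm_sub_le _ _).trans_eq ?_
  rw [norm_mul, norm_mul, neg_mul, h₁, h₂]
  simp

theorem exists_norm_polynomialFourier_le_div (p : Polynomial ℝ) :
    ∃ K : ℝ, ∀ θ : ℝ, 0 < θ → ‖polynomialFourier p θ‖ ≤ K / θ := by
  obtain ⟨K, hK⟩ := exists_norm_polynomialFourier_le p.derivative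
  refine ⟨|p.eval 1| + |p.eval (-1)| + K, fun θ hθ => ?_⟩
  rw [polynomialFourier_eq p hθ.ne', norm_div]
  have hnorm : ‖-Complex.I * (θ : ℂ)‖ = θ := by simp [abs_of_pos hθ]
  rw [hnorm]
  gcongr
  exact (norm_sub_le _ _).trans (add_le_add (norm_fourierBoundary_le p θ) (hK θ))

/-- The leading asymptotics of the Fourier integral come from the endpoints. -/
theorem polynomialFourier_sub_isBigO (p : Polynomial ℝ) :
    (fun θ : ℝ => polynomialFourier p θ - fourierBoundary p θ / (-Complex.I * θ))
      =O[atTop] fun θ : ℝ => 1 / θ ^ 2 := by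
  obtain ⟨K, hK⟩ := exists_norm_polynomialFourier_le_div p.derivative
  refine IsBigO.of_bound K ?_
  filter_upwards [eventually_gt_atTop 0] with θ hθ
  have hnorm : ‖-Complex.I * (θ : ℂ)‖ = θ := by simp [abs_of_pos hθ]
  rw [polynomialFourier_eq p hθ.ne', ← sub_div, sub_sub_cancel_left, norm_div, norm_neg, hnorm,
    Real.norm_of_nonneg (by positivity)]
  calc ‖polynomialFourier p.derivative θ‖ / θ ≤ K / θ / θ := by gcongr; exact hK θ hθ
    _ = K * (1 / θ ^ 2) := by field_simp

theorem fourierBoundary_legendrePolynomial (n : ℕ) (θ : ℝ) :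
    fourierBoundary (legendrePolynomial n) θ / (-Complex.I * θ) =
      (2 * (-Complex.I) ^ n / (θ : ℂ)) * (Real.sin (θ - n * Real.pi / 2) : ℂ) := by
  have hpos : Complex.exp (n * (Real.pi / 2 * Complex.I)) = Complex.I ^ n := by
    rw [Complex.exp_nat_mul, Complex.exp_pi_div_two_mul_I]
  have hneg : Complex.exp (n * (-Real.pi / 2 * Complex.I)) = (-Complex.I) ^ n := by
    rw [Complex.exp_nat_mul, Complex.exp_neg_pi_div_two_mul_I]
  have hprod : (-Complex.I) ^ n * Complex.I ^ n = 1 := by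
    rw [← mul_pow]
    simp
  have hsq : (-Complex.I) ^ n * (-Complex.I) ^ n = (-1) ^ n := by
    rw [← mul_pow]
    simp
  have h₁ : Complex.exp (-(θ - n * Real.pi / 2) * Complex.I) =
      Complex.exp (-Complex.I * θ) * Complex.I ^ n := by
    rw [← hpos, ← Complex.exp_add]
    ring_nf
  have h₂ : Complex.exp ((θ - n * Real.pi / 2) * Complex.I) =
      Complex.exp (Complex.I * θ) * (-Complex.I) ^ n := by
    rw [← hneg, ← Complex.exp_add]
    ring_nf
  rw [fourierBoundary, legendrePolynomial_eval_of_sq_eq_one n (one_pow 2),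
    legendrePolynomial_eval_of_sq_eq_one n (by norm_num)]
  push_cast
  rw [Complex.sin, h₁, h₂, div_mul_eq_div_div, div_neg, Complex.div_I, neg_neg, one_pow, one_mul]
  linear_combination -(Complex.I * Complex.exp (-Complex.I * θ) / θ) * hprod
    + (Complex.I * Complex.exp (Complex.I * θ) / θ) * hsq

/-- As `θ → ∞`,
`∫_{−1}^{1} P_n(x) e^{−iθx} dx − (2(−i)^n/θ) sin(θ − nπ/2) = O(θ^{−2})`. -/
theorem legendre_fourier_asymptotics (n : ℕ) :
    (fun θ : ℝ =>
        (∫ x in (-1 : ℝ)..1, (legendre n x : ℂ) * Complex.exp (-Complex.I * θ * x))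
          - (2 * (-Complex.I) ^ n / (θ : ℂ)) * (Real.sin (θ - n * Real.pi / 2) : ℂ))
      =O[atTop] fun θ : ℝ => 1 / θ ^ 2 := by
  refine (polynomialFourier_sub_isBigO (legendrePolynomial n)).congr_left fun θ => ?_
  rw [fourierBoundary_legendrePolynomial, polynomialFourier]
  simp only [legendre_eq_eval]
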